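/- Consider the matrix ODE along a curve: for continuous functions f, g : [0,1] → ℂ and a parameter t ∈ ℂ, let X(s,t) ∈ Matrix (Fin 2) (Fin 2) ℂ solve ∂ₛX(s,t) = X(s,t)·[[0, t·f(s)],[g(s), 0]] with X(0,t) = Id, and set τ(t) = (1/2)·trace X(1,t). Define I₀ = ∫₀¹ f(s) ds, I₁ = ∫₀¹ f(s)·(∫₀ˢ g(v) dv) ds, I₂ = ∫₀¹ g(s)·(∫₀ˢ f(u)·(∫₀ᵘ g(v) dv) du) ds. Assume X is twice continuously differentiable jointly in (s,t), det X(s,t) = 1 for all s and t, and ∫₀¹ g(s) ds = 0. Then τ(0) = 1, τ'(0) = 0, and τ''(0) = I₀·I₂ + I₁². -/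

import Mathlib

attribute [local instance] Matrix.normedAddCommGroup Matrix.normedSpace

/-!
Write `P` for integration from `0` on `C([0, 1])`. Each row of the matrix equation is a coupled
pair of scalar equations, so the diagonal entries of `X` solve `a = 1 + t P(g P(f a))` and
`d = 1 + t P(f P(g d))`. Near `t = 0` the Neumann series expands the half-trace into powers of `t`,
whose coefficients are the iterated integrals of the alternating words `gf…gf` and `fg…fg`.
Integration by parts says that `P` is a Rota–Baxter operator, so products of iterated integrals
expand into shuffles of words. With `|w|` for the iterated integral over `[0, 1]` of the word `w`,
`|fg| + |gf| = |f||g|` and `|gfgf| + |fgfg| = |f||gfg| + |fg|² - 2|g||ffg|`, and here `|g| = 0`.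
-/

open Filter Topology Set
open scoped Nat

/-- A Rota–Baxter operator of weight zero, the algebraic form of the integration by parts rule for
an indefinite integral. -/
def IsRotaBaxter {A : Type*} [Mul A] [Add A] (P : A → A) : Prop :=
  ∀ x y, P x * P y = P (x * P y) + P (P x * y)

namespace IsRotaBaxter

variable {A F : Type*} [CommRing A] [FunLike F A A] [AddMonoidHomClass F A A] {P : F}

theorem map_mul_map_mul_map (hP : IsRotaBaxter P) (f g : A) :
    P f * P (f * P g) = 2 * P (f * P (f * P g)) + P (f * P (g * P f)) :=
  calc P f * P (f * P g)
      = P (f * P (f * P g)) + P (f * (P f * P g)) := by rw [hP]; ring_nf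
    _ = P (f * P (f * P g)) + P (f * P (f * P g) + f * P (g * P f)) := by
        rw [hP f g, mul_add, mul_comm (P f) g]
    _ = 2 * P (f * P (f * P g)) + P (f * P (g * P f)) := by rw [map_add]; ring

theorem map_mul_map_mul_map_mul_map (hP : IsRotaBaxter P) (f g : A) :
    P f * P (g * P (f * P g)) = P (f * P (g * P (f * P g))) +
      (2 * P (g * P (f * P (f * P g))) + P (g * P (f * P (g * P f)))) :=
  calc P f * P (g * P (f * P g))
      = P (f * P (g * P (f * P g))) + P (g * (P f * P (f * P g))) := by rw [hP]; ring_nf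
    _ = P (f * P (g * P (f * P g))) +
          P (g * P (f * P (f * P g)) + g * P (f * P (f * P g)) + g * P (f * P (g * P f))) := by
        rw [hP.map_mul_map_mul_map]; ring_nf
    _ = P (f * P (g * P (f * P g))) +
          (2 * P (g * P (f * P (f * P g))) + P (g * P (f * P (g * P f)))) := by
        rw [map_add, map_add]; ring

theorem alternating_add_alternating_swap (hP : IsRotaBaxter P) (f g : A) :
    P (g * P (f * P (g * P f))) + P (f * P (g * P (f * P g))) =
      P f * P (g * P (f * P g)) + P (f * P g) ^ 2 - 2 * (P g * P (f * P (f * P g))) := by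
  have g_mul_ffg : P g * P (f * P (f * P g)) =
      P (g * P (f * P (f * P g))) + P (f * (P g * P (f * P g))) := by
    rw [hP]; ring_nf
  have fg_sq : P (f * P g) ^ 2 = 2 * P (f * (P g * P (f * P g))) := by
    rw [sq, hP]; ring_nf
  linear_combination -hP.map_mul_map_mul_map_mul_map f g - fg_sq + 2 * g_mul_ffg

end IsRotaBaxter

section PowerSeries

variable {𝕜 E : Type*} [NontriviallyNormedField 𝕜] [NormedAddCommGroup E] [NormedSpace 𝕜 E]
  [CompleteSpace E]

theorem iteratedDeriv_zero_of_hasSum {f : 𝕜 → E} {c : ℕ → E}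
    (hf : ∀ᶠ t in 𝓝 0, HasSum (fun n ↦ t ^ n • c n) (f t)) (n : ℕ) :
    iteratedDeriv n f 0 = n ! • c n := by
  let p : FormalMultilinearSeries 𝕜 𝕜 E := fun n ↦ .mkPiRing 𝕜 (Fin n) (c n)
  have p_coeff (n : ℕ) : p.coeff n = c n := by simp [p, FormalMultilinearSeries.coeff]
  obtain ⟨r, hr⟩ : HasFPowerSeriesAt f p 0 :=
    hasFPowerSeriesAt_iff.2 (by simpa only [p_coeff, zero_add] using hf)
  rw [iteratedDeriv_eq_iteratedFDeriv, ← p_coeff]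
  exact (hr.factorial_smul 1 n).symm

theorem hasSum_neumann_series {K : E →L[𝕜] E} {t : 𝕜} {v y : E} (ht : ‖t • K‖ < 1)
    (hy : y = v + t • K y) : HasSum (fun n ↦ t ^ n • (K ^ n) v) y := by
  have inverse_apply : Ring.inverse (1 - t • K) v = y := by
    have hv : (1 - t • K) y = v := by
      simpa [sub_eq_iff_eq_add] using hy
    rw [← hv, ← mul_apply_eq_comp,
      Ring.inverse_mul_cancel _ (isUnit_one_sub_of_norm_lt_one ht), one_apply_eq_self]
  simpa [smul_pow, inverse_apply] using
    (hasSum_geom_series_inverse _ ht).mapL (ContinuousLinearMap.apply 𝕜 E v)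

theorem eventually_hasSum_neumann_series {K : E →L[𝕜] E} {v : E} {y : 𝕜 → E}
    (hy : ∀ t, y t = v + t • K (y t)) :
    ∀ᶠ t in 𝓝 0, HasSum (fun n ↦ t ^ n • (K ^ n) v) (y t) := by
  have norm_lt : ∀ᶠ t : 𝕜 in 𝓝 0, ‖t • K‖ < 1 :=
    ContinuousAt.eventually_lt (by fun_prop) continuousAt_const (by simp)
  filter_upwards [norm_lt] with t ht using hasSum_neumann_series ht (hy t)

end PowerSeries

section Primitive

variable {𝕜 : Type*} [RCLike 𝕜]

/-- The indefinite integral `y ↦ (s ↦ ∫ u in 0..s, y u)`, as an operator on `C([0, 1])`. The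
integrand `y` is extended to `ℝ` by its boundary values. -/
noncomputable def primitive : C(unitInterval, 𝕜) →L[𝕜] C(unitInterval, 𝕜) :=
  LinearMap.mkContinuous
    { toFun y := ⟨fun s ↦ ∫ u in (0 : ℝ)..s, y.IccExtend zero_le_one u,
        (intervalIntegral.continuous_primitive
          (fun _ _ ↦ (map_continuous _).intervalIntegrable _ _) 0).comp continuous_subtype_val⟩
      map_add' x y := by
        ext s
        exact intervalIntegral.integral_add
          ((map_continuous (x.IccExtend zero_le_one)).intervalIntegrable _ _)
          ((map_continuous (y.IccExtend zero_le_one)).intervalIntegrable _ _)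
      map_smul' c y := by
        ext s
        exact intervalIntegral.integral_smul c _ }
    1 fun y ↦ by
      refine (ContinuousMap.norm_le _ (by positivity)).2 fun s ↦ ?_
      refine (intervalIntegral.norm_integral_le_of_norm_le_const
        fun u _ ↦ y.norm_coe_le_norm (projIcc 0 1 zero_le_one u)).trans ?_
      rw [sub_zero, abs_of_nonneg s.2.1, one_mul]
      exact mul_le_of_le_one_right (norm_nonneg y) s.2.2

theorem primitive_apply (y : C(unitInterval, 𝕜)) (s : unitInterval) :
    primitive y s = ∫ u in (0 : ℝ)..s, y.IccExtend zero_le_one u := rfl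

theorem primitive_eq_integral {y : C(unitInterval, 𝕜)} {h : ℝ → 𝕜}
    (hy : ∀ u : unitInterval, y u = h u) (s : unitInterval) :
    primitive y s = ∫ u in (0 : ℝ)..s, h u := by
  refine intervalIntegral.integral_congr fun u hu ↦ ?_
  rw [uIcc_of_le s.2.1] at hu
  have hu' : u ∈ Icc (0 : ℝ) 1 := ⟨hu.1, hu.2.trans s.2.2⟩
  exact (IccExtend_of_mem zero_le_one y hu').trans (hy ⟨u, hu'⟩)

theorem eq_add_primitive_of_hasDerivWithinAt {x : ℝ → 𝕜} {x' : C(unitInterval, 𝕜)}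
    (hx : ∀ s : unitInterval, HasDerivWithinAt x (x' s) (Icc 0 1) s) (s : unitInterval) :
    x s = x 0 + primitive x' s := by
  have hsub : Icc 0 (s : ℝ) ⊆ Icc 0 1 := Icc_subset_Icc_right s.2.2
  have ftc : ∫ u in (0 : ℝ)..s, x'.IccExtend zero_le_one u = x s - x 0 := by
    refine intervalIntegral.integral_eq_sub_of_hasDerivAt_of_le s.2.1
      (fun u hu ↦ (hx ⟨u, hsub hu⟩).continuousWithinAt.mono hsub) (fun u hu ↦ ?_)
      ((map_continuous _).intervalIntegrable _ _)
    have hu' : u ∈ Icc (0 : ℝ) 1 := hsub (Ioo_subset_Icc_self hu)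
    rw [ContinuousMap.coe_IccExtend, IccExtend_of_mem zero_le_one x' hu']
    exact (hx ⟨u, hu'⟩).hasDerivAt (Icc_mem_nhds hu.1 (hu.2.trans_le s.2.2))
  exact eq_add_of_sub_eq' ftc.symm

theorem hasDerivAt_integral_IccExtend (y : C(unitInterval, 𝕜)) (s : unitInterval) :
    HasDerivAt (fun r : ℝ ↦ ∫ u in (0 : ℝ)..r, y.IccExtend zero_le_one u) (y s) s := by
  have h := intervalIntegral.integral_hasDerivAt_right
    ((map_continuous (y.IccExtend zero_le_one)).intervalIntegrable 0 s)
    ((map_continuous _).stronglyMeasurableAtFilter _ _) (map_continuous _).continuousAt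
  rwa [ContinuousMap.coe_IccExtend, IccExtend_val] at h

theorem isRotaBaxter_primitive :
    IsRotaBaxter (primitive : C(unitInterval, 𝕜) →L[𝕜] C(unitInterval, 𝕜)) := by
  intro x y
  ext s
  have product_rule (r : unitInterval) := ((hasDerivAt_integral_IccExtend x r).mul
    (hasDerivAt_integral_IccExtend y r)).hasDerivWithinAt (s := Icc 0 1)
  simpa [primitive_apply] using eq_add_primitive_of_hasDerivWithinAt
    (x' := x * primitive y + primitive x * y) product_rule s

/-- The Volterra operator `y ↦ (s ↦ ∫ u in 0..s, k u * y u)` on `C([0, 1])`. -/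
noncomputable def volterra (k : C(unitInterval, 𝕜)) : C(unitInterval, 𝕜) →L[𝕜] C(unitInterval, 𝕜) :=
  primitive ∘L ContinuousLinearMap.mul 𝕜 _ k

theorem volterra_apply (k y : C(unitInterval, 𝕜)) : volterra k y = primitive (k * y) := rfl

theorem volterra_smul (t : 𝕜) (k : C(unitInterval, 𝕜)) : volterra (t • k) = t • volterra k := by
  simp [volterra]

theorem exists_eq_one_add_volterra {k l : C(unitInterval, 𝕜)} {x y : ℝ → 𝕜}
    (hx : ∀ s : unitInterval, HasDerivWithinAt x (k s * y s) (Icc 0 1) s)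
    (hy : ∀ s : unitInterval, HasDerivWithinAt y (l s * x s) (Icc 0 1) s)
    (hx₀ : x 0 = 1) (hy₀ : y 0 = 0) :
    ∃ z : C(unitInterval, 𝕜), z 1 = x 1 ∧ z = 1 + volterra k (volterra l z) := by
  let z : C(unitInterval, 𝕜) :=
    ⟨(Icc 0 1).domRestrict x, continuousOn_iff_continuous_domRestrict.1 fun s hs ↦
      (hx ⟨s, hs⟩).continuousWithinAt⟩
  let w : C(unitInterval, 𝕜) :=
    ⟨(Icc 0 1).domRestrict y, continuousOn_iff_continuous_domRestrict.1 fun s hs ↦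
      (hy ⟨s, hs⟩).continuousWithinAt⟩
  have hw : w = volterra l z := by
    ext s
    exact (eq_add_primitive_of_hasDerivWithinAt (x' := l * z) hy s).trans (by simp [hy₀, volterra])
  refine ⟨z, rfl, ?_⟩
  rw [← hw]
  ext s
  exact (eq_add_primitive_of_hasDerivWithinAt (x' := k * w) hx s).trans (by simp [hx₀, volterra])

theorem volterra_mul_add_swap (f g : C(unitInterval, 𝕜)) :
    (volterra g * volterra f) 1 + (volterra f * volterra g) 1 = primitive f * primitive g := by
  simp [volterra_apply, isRotaBaxter_primitive f g, mul_comm, add_comm]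

theorem volterra_mul_sq_add_swap (f g : C(unitInterval, 𝕜)) :
    ((volterra g * volterra f) ^ 2) 1 + ((volterra f * volterra g) ^ 2) 1 =
      primitive f * primitive (g * primitive (f * primitive g)) +
        primitive (f * primitive g) ^ 2 -
        2 * (primitive g * primitive (f * primitive (f * primitive g))) := by
  rw [← isRotaBaxter_primitive.alternating_add_alternating_swap]
  simp [sq, volterra_apply]

end Primitive

section Monodromy

variable {𝕜 : Type*} [RCLike 𝕜]

theorem hasDerivWithinAt_row {x : ℝ → Matrix (Fin 2) (Fin 2) 𝕜} {p q : 𝕜} {S : Set ℝ} {s : ℝ}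
    (hx : HasDerivWithinAt x (x s * !![0, p; q, 0]) S s) (i : Fin 2) :
    HasDerivWithinAt (fun r ↦ x r i 0) (q * x s i 1) S s ∧
      HasDerivWithinAt (fun r ↦ x r i 1) (p * x s i 0) S s := by
  have entry (j : Fin 2) := hasDerivWithinAt_pi.1 (hasDerivWithinAt_pi.1 hx i) j
  exact ⟨by simpa [Matrix.mul_apply, mul_comm] using entry 0,
    by simpa [Matrix.mul_apply, mul_comm] using entry 1⟩

theorem iteratedDeriv_half_trace (f g : C(unitInterval, 𝕜)) {X : ℝ × 𝕜 → Matrix (Fin 2) (Fin 2) 𝕜}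
    (hode : ∀ t : 𝕜, ∀ s : unitInterval,
      HasDerivWithinAt (fun r ↦ X (r, t)) (X (s, t) * !![0, t * f s; g s, 0]) (Icc 0 1) s)
    (hinit : ∀ t, X (0, t) = 1) (n : ℕ) :
    iteratedDeriv n (fun t ↦ 1 / 2 * (X (1, t)).trace) 0 =
      n ! * (1 / 2 * (((volterra g * volterra f) ^ n) 1 1 +
        ((volterra f * volterra g) ^ n) 1 1)) := by
  have exists_diag₀ (t : 𝕜) := exists_eq_one_add_volterra (k := g) (l := t • f)
    (x := fun s ↦ X (s, t) 0 0) (y := fun s ↦ X (s, t) 0 1)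
    (fun s ↦ (hasDerivWithinAt_row (hode t s) 0).1)
    (fun s ↦ (hasDerivWithinAt_row (hode t s) 0).2) (by simp [hinit]) (by simp [hinit])
  have exists_diag₁ (t : 𝕜) := exists_eq_one_add_volterra (k := t • f) (l := g)
    (x := fun s ↦ X (s, t) 1 1) (y := fun s ↦ X (s, t) 1 0)
    (fun s ↦ (hasDerivWithinAt_row (hode t s) 1).2)
    (fun s ↦ (hasDerivWithinAt_row (hode t s) 1).1) (by simp [hinit]) (by simp [hinit])
  choose a ha₁ ha using exists_diag₀
  choose d hd₁ hd using exists_diag₁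
  have a_series := eventually_hasSum_neumann_series (K := volterra g * volterra f) (v := 1) (y := a)
    fun t ↦ by simpa [volterra_smul] using ha t
  have d_series := eventually_hasSum_neumann_series (K := volterra f * volterra g) (v := 1) (y := d)
    fun t ↦ by simpa [volterra_smul] using hd t
  rw [← nsmul_eq_mul]
  refine iteratedDeriv_zero_of_hasSum (c := fun m ↦ 1 / 2 *
    (((volterra g * volterra f) ^ m) 1 1 + ((volterra f * volterra g) ^ m) 1 1)) ?_ n
  filter_upwards [a_series, d_series] with t hat hdt
  let eval_one : C(unitInterval, 𝕜) →L[𝕜] 𝕜 := ContinuousMap.evalCLM 𝕜 1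
  have trace_series := ((hat.mapL eval_one).add (hdt.mapL eval_one)).mul_left (1 / 2)
  simpa [eval_one, ha₁, hd₁, Matrix.trace_fin_two, mul_add, mul_left_comm] using trace_series

end Monodromy

theorem half_trace_derivatives_general {𝕜 : Type*} [RCLike 𝕜] (f g : ℝ → 𝕜)
    (hf : ContinuousOn f (Icc 0 1)) (hg : ContinuousOn g (Icc 0 1))
    (X : ℝ × 𝕜 → Matrix (Fin 2) (Fin 2) 𝕜)
    (hode : ∀ t : 𝕜, ∀ s ∈ Icc (0 : ℝ) 1,
      HasDerivWithinAt (fun s' ↦ X (s', t)) (X (s, t) * !![0, t * f s; g s, 0]) (Icc 0 1) s)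
    (hinit : ∀ t : 𝕜, X (0, t) = 1)
    (τ : 𝕜 → 𝕜) (hτ : τ = fun t ↦ 1 / 2 * (X (1, t)).trace)
    (hgint : ∫ s in (0 : ℝ)..1, g s = 0)
    (I₀ I₁ I₂ : 𝕜)
    (hI₀ : I₀ = ∫ s in (0 : ℝ)..1, f s)
    (hI₁ : I₁ = ∫ s in (0 : ℝ)..1, f s * ∫ v in (0 : ℝ)..s, g v)
    (hI₂ : I₂ = ∫ s in (0 : ℝ)..1, g s * ∫ u in (0 : ℝ)..s, f u * ∫ v in (0 : ℝ)..u, g v) :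
    τ 0 = 1 ∧ deriv τ 0 = 0 ∧ iteratedDeriv 2 τ 0 = I₀ * I₂ + I₁ ^ 2 := by
  let F : C(unitInterval, 𝕜) := ⟨(Icc 0 1).domRestrict f, hf.domRestrict⟩
  let G : C(unitInterval, 𝕜) := ⟨(Icc 0 1).domRestrict g, hg.domRestrict⟩
  have int_F : primitive F 1 = I₀ := hI₀ ▸ primitive_eq_integral (fun _ ↦ rfl) 1
  have int_G (s : unitInterval) : primitive G s = ∫ v in (0 : ℝ)..s, g v :=
    primitive_eq_integral (fun _ ↦ rfl) s
  have int_FG (s : unitInterval) : primitive (F * primitive G) s =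
      ∫ u in (0 : ℝ)..s, f u * ∫ v in (0 : ℝ)..u, g v :=
    primitive_eq_integral (fun u ↦ congrArg (f u * ·) (int_G u)) s
  have int_GFG : primitive (G * primitive (F * primitive G)) 1 = I₂ :=
    hI₂ ▸ primitive_eq_integral (fun s ↦ congrArg (g s * ·) (int_FG s)) 1
  have int_G_one : primitive G 1 = 0 := (int_G 1).trans hgint
  have int_FG_one : primitive (F * primitive G) 1 = I₁ := (int_FG 1).trans hI₁.symm
  have taylor (n : ℕ) := hτ ▸ iteratedDeriv_half_trace F G (fun t s ↦ hode t s s.2) hinit n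
  refine ⟨by simpa [← two_mul] using taylor 0, ?_, ?_⟩
  · rw [← iteratedDeriv_one, taylor, pow_one, pow_one, ← ContinuousMap.add_apply,
      volterra_mul_add_swap]
    simp [int_G_one]
  · rw [taylor, ← ContinuousMap.add_apply, volterra_mul_sq_add_swap]
    simp [int_F, int_G_one, int_FG_one, int_GFG]

/-- The first two `t`-derivatives of the half-trace `τ(t) = (1/2)·tr X(1,t)` of the
monodromy at `t = 0`:  `τ(0) = 1`, `τ'(0) = 0` and `τ''(0) = I₀I₂ + I₁²`
(key step in the proof of Lemma 2.5). -/
theorem half_trace_derivatives (f g : ℝ → ℂ)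
    (hf : ContinuousOn f (Set.Icc 0 1)) (hg : ContinuousOn g (Set.Icc 0 1))
    (X : ℝ × ℂ → Matrix (Fin 2) (Fin 2) ℂ)
    (hX : ContDiffOn ℝ 2 X (Set.Icc (0:ℝ) 1 ×ˢ Set.univ))
    (hode : ∀ t : ℂ, ∀ s ∈ Set.Icc (0:ℝ) 1,
      HasDerivWithinAt (fun s' => X (s', t)) (X (s, t) * !![0, t * f s; g s, 0])
        (Set.Icc (0:ℝ) 1) s)
    (hinit : ∀ t : ℂ, X (0, t) = 1)
    (hdet : ∀ t : ℂ, ∀ s ∈ Set.Icc (0:ℝ) 1, (X (s, t)).det = 1)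
    (τ : ℂ → ℂ) (hτ : τ = fun t => (1 / 2 : ℂ) * (X (1, t)).trace)
    (hgint : (∫ s in (0:ℝ)..1, g s) = 0)
    (I₀ I₁ I₂ : ℂ)
    (hI₀ : I₀ = ∫ s in (0:ℝ)..1, f s)
    (hI₁ : I₁ = ∫ s in (0:ℝ)..1, f s * ∫ v in (0:ℝ)..s, g v)
    (hI₂ : I₂ = ∫ s in (0:ℝ)..1, g s * ∫ u in (0:ℝ)..s, f u * ∫ v in (0:ℝ)..u, g v) :
    τ 0 = 1 ∧ deriv τ 0 = 0 ∧ iteratedDeriv 2 τ 0 = I₀ * I₂ + I₁ ^ 2 :=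
  half_trace_derivatives_general f g hf hg X hode hinit τ hτ hgint I₀ I₁ I₂ hI₀ hI₁ hI₂
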